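/- The stairs functional R_ξ is nondecreasing, and for every t ≥ 0 it admits the variational representation R_ξ(t) = sup{ Σ_{i=1}^k ξ_{t_i} : k ∈ ℕ, 0 ≤ t_1 < t_2 < … < t_k ≤ t, and t_i − t_{i−1} ≥ 1 for all 2 ≤ i ≤ k }, where the supremum over the empty collection (k = 0) is taken to be 0. -/

import Mathlib

open MeasureTheory Real Filter Set

noncomputable section

/-- Auxiliary construction of the stairs functional: `stairsAux ξ n` agrees with `R_ξ` on
`(-∞, n]`; on `(n-1, n]` it is given by the defining recursion
`R_ξ(t) = sup_{s ∈ [0,1]} (R_ξ(t−s−1) + ξ(t−s))`. -/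
def stairsAux (ξ : ℝ → ℝ) : ℕ → ℝ → ℝ
  | 0, _ => 0
  | n + 1, t =>
    if t ≤ n then stairsAux ξ n t
    else ⨆ s : Set.Icc (0 : ℝ) 1, (stairsAux ξ n (t - (s : ℝ) - 1) + ξ (t - (s : ℝ)))

/-- The stairs functional `R_ξ`: `R_ξ(t) = 0` for `t ≤ 0` and, inductively for `t ∈ (n, n+1]`,
`R_ξ(t) = sup_{s ∈ [0,1]} (R_ξ(t−s−1) + ξ(t−s))`. -/
def stairs (ξ : ℝ → ℝ) (t : ℝ) : ℝ :=
  stairsAux ξ ⌈t⌉₊ t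

def chainSet (ξ : ℝ → ℝ) (t : ℝ) : Set ℝ :=
  {y : ℝ | ∃ (k : ℕ) (ts : Fin k → ℝ),
        StrictMono ts ∧ (∀ i, ts i ∈ Set.Icc (0 : ℝ) t) ∧
        (∀ (i : Fin k) (h : (i : ℕ) + 1 < k), 1 ≤ ts ⟨(i : ℕ) + 1, h⟩ - ts i) ∧
        y = ∑ i, ξ (ts i)}

lemma chainSet_mono (ξ : ℝ → ℝ) {a b : ℝ} (h : a ≤ b) : chainSet ξ a ⊆ chainSet ξ b := by
  rintro y ⟨k, ts, h1, h2, h3, h4⟩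
  exact ⟨k, ts, h1, fun i => ⟨(h2 i).1, (h2 i).2.trans h⟩, h3, h4⟩

lemma chainSet_zero (ξ : ℝ → ℝ) (t : ℝ) : (0 : ℝ) ∈ chainSet ξ t :=
  ⟨0, Fin.elim0, fun i => i.elim0, fun i => i.elim0, fun i => i.elim0, by simp⟩

lemma chainSet_snoc (ξ : ℝ → ℝ) {u y : ℝ} (hu : 0 ≤ u + 1) (hy : y ∈ chainSet ξ u) :
    y + ξ (u + 1) ∈ chainSet ξ (u + 1) := by
  obtain ⟨k, ts, h1, h2, h3, rfl⟩ := hy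
  refine ⟨k + 1, Fin.snoc (α := fun _ => ℝ) ts (u + 1), ?_, ?_, ?_, ?_⟩
  · intro i j hij
    induction j using Fin.lastCases with
    | last =>
      induction i using Fin.lastCases with
      | last => exact absurd hij (lt_irrefl _)
      | cast i => simp only [Fin.snoc_castSucc, Fin.snoc_last]; linarith [(h2 i).2]
    | cast j =>
      induction i using Fin.lastCases with
      | last => exact absurd hij (not_lt.mpr (Fin.le_last _))
      | cast i =>
        simp only [Fin.snoc_castSucc]
        exact h1 (by simpa using hij)
  · intro i
    induction i using Fin.lastCases with
    | last => simpa using hu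
    | cast i =>
      simp only [Fin.snoc_castSucc]
      exact ⟨(h2 i).1, by linarith [(h2 i).2]⟩
  · intro i h
    induction i using Fin.lastCases with
    | last => simp at h
    | cast i =>
      by_cases hk : (i : ℕ) + 1 < k
      · have := h3 i hk
        have e : (⟨(i.castSucc : ℕ) + 1, h⟩ : Fin (k+1)) = Fin.castSucc ⟨(i : ℕ) + 1, hk⟩ := rfl
        rw [e]
        simpa only [Fin.snoc_castSucc] using this
      · have e : (⟨(i.castSucc : ℕ) + 1, h⟩ : Fin (k+1)) = Fin.last k := by
          ext
          have := i.2
          simp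
          omega
        rw [e]
        simp only [Fin.snoc_castSucc, Fin.snoc_last]
        linarith [(h2 i).2]
  · rw [Fin.sum_univ_castSucc]
    simp

lemma chain_cases (ξ : ℝ → ℝ) {t y : ℝ} (hy : y ∈ chainSet ξ t) :
    y = 0 ∨ ∃ v, v ≤ t ∧ y ∈ chainSet ξ v ∧ ∃ z ∈ chainSet ξ (v - 1), y = z + ξ v := by
  obtain ⟨k, ts, h1, h2, h3, rfl⟩ := hy
  cases k with
  | zero => left; simp
  | succ k =>
    right
    refine ⟨ts (Fin.last k), (h2 _).2, ⟨k + 1, ts, h1, fun i => ⟨(h2 i).1,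
      h1.monotone (Fin.le_last i)⟩, h3, rfl⟩, ∑ i : Fin k, ξ (ts i.castSucc),
      ⟨k, fun i => ts i.castSucc, fun i j hij => h1 (by simpa using hij), fun i => ⟨(h2 _).1, ?_⟩,
        fun i h => h3 i.castSucc (by simp), rfl⟩, Fin.sum_univ_castSucc _⟩
    have a := h3 i.castSucc (by simp)
    have b : ts ⟨(i.castSucc : ℕ) + 1, by simp⟩ ≤ ts (Fin.last k) := h1.monotone (Fin.le_last _)
    linarith

lemma stairsAux_isLUB (ξ : ℝ → ℝ) (hξ0 : ∀ t, 0 ≤ ξ t) (hξneg : ∀ t ≤ (0 : ℝ), ξ t = 0)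
    (hξfin : ∀ a : ℝ, 0 < a → ∀ b c : ℝ, {t | t ∈ Set.Icc b c ∧ a ≤ ξ t}.Finite) (n : ℕ) :
    ∀ t : ℝ, t ≤ n → IsLUB (chainSet ξ t) (stairsAux ξ n t) := by
  induction n with
  | zero =>
    intro t ht
    simp only [Nat.cast_zero] at ht
    constructor
    · rintro y ⟨k, ts, h1, h2, h3, rfl⟩
      simp only [stairsAux]
      exact (Finset.sum_eq_zero fun i _ => hξneg _ ((h2 i).2.trans ht)).le
    · intro b hb
      exact hb (chainSet_zero ξ t)
  | succ n ih =>
    intro t ht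
    by_cases h : t ≤ n
    · simp only [stairsAux, if_pos h]
      exact ih t h
    simp only [stairsAux, if_neg h]
    push Not at h
    push_cast at ht
    obtain ⟨M, hM⟩ : ∃ M, ∀ s ∈ Set.Icc (t - 1) t, ξ s ≤ M := by
      obtain ⟨M, hM⟩ := ((hξfin 1 one_pos (t - 1) t).image ξ).bddAbove
      refine ⟨max M 1, fun s hs => ?_⟩
      by_cases h1 : 1 ≤ ξ s
      · exact (hM ⟨s, ⟨hs, h1⟩, rfl⟩).trans (le_max_left _ _)
      · exact (not_le.mp h1).le.trans (le_max_right _ _)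
    have hmono : ∀ a b : ℝ, a ≤ b → b ≤ n → stairsAux ξ n a ≤ stairsAux ξ n b := fun a b hab hb =>
      (ih a (hab.trans hb)).mono (ih b hb) (chainSet_mono ξ hab)
    have hbdd : BddAbove (Set.range fun s : Set.Icc (0 : ℝ) 1 =>
        (stairsAux ξ n (t - (s : ℝ) - 1) + ξ (t - (s : ℝ)))) := by
      refine ⟨stairsAux ξ n (t - 1) + M, ?_⟩
      rintro _ ⟨⟨s, hs0, hs1⟩, rfl⟩
      exact add_le_add (hmono _ _ (by linarith) (by linarith))
        (hM _ ⟨by simp only; linarith, by simp only; linarith⟩)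
    have hle : ∀ s : ℝ, 0 ≤ s → s ≤ 1 → stairsAux ξ n (t - s - 1) + ξ (t - s) ≤
        ⨆ s : Set.Icc (0 : ℝ) 1, (stairsAux ξ n (t - (s : ℝ) - 1) + ξ (t - (s : ℝ))) :=
      fun s h0 h1 => le_ciSup hbdd (⟨s, h0, h1⟩ : Set.Icc (0 : ℝ) 1)
    have hle0 : ∀ y ∈ chainSet ξ (t - 1), y ≤
        ⨆ s : Set.Icc (0 : ℝ) 1, (stairsAux ξ n (t - (s : ℝ) - 1) + ξ (t - (s : ℝ))) := by
      intro y hy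
      have a := hle 0 le_rfl zero_le_one
      have b := (ih (t - 1) (by linarith)).1 hy
      rw [sub_zero] at a
      linarith [hξ0 t]
    constructor
    · intro y hy
      rcases chain_cases ξ hy with rfl | ⟨v, hv, hyv, z, hz, rfl⟩
      · exact hle0 _ (chainSet_zero ξ _)
      · by_cases hvt : v ≤ t - 1
        · exact hle0 _ (chainSet_mono ξ hvt hyv)
        · push Not at hvt
          have a := hle (t - v) (by linarith) (by linarith)
          rw [sub_sub_cancel] at a
          have b := (ih (v - 1) (by linarith)).1 hz
          linarith
    · intro b hb
      haveI : Nonempty (Set.Icc (0 : ℝ) 1) := ⟨⟨0, by simp⟩⟩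
      apply ciSup_le
      rintro ⟨s, hs0, hs1⟩
      simp only
      rw [← le_sub_iff_add_le]
      refine (ih (t - s - 1) (by linarith)).2 ?_
      intro y hy
      rw [le_sub_iff_add_le]
      rcases le_or_gt 0 (t - s) with hts | hts
      · have := chainSet_snoc ξ (by linarith) hy
        rw [sub_add_cancel] at this
        exact hb (chainSet_mono ξ (by linarith) this)
      · rw [hξneg _ hts.le, add_zero]
        exact hb (chainSet_mono ξ (by linarith) hy)

/-- the stairs functional `R_ξ` is nondecreasing and, for `t ≥ 0`, admits the
variational representation
`R_ξ(t) = sup { Σ_{i=1}^k ξ_{t_i} : k ∈ ℕ, 0 ≤ t_1 < … < t_k ≤ t, t_i − t_{i−1} ≥ 1 }`,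
with the empty collection contributing `0`. -/
theorem stmt_11 (ξ : ℝ → ℝ) (hξ0 : ∀ t, 0 ≤ ξ t) (hξneg : ∀ t ≤ (0 : ℝ), ξ t = 0)
    (hξfin : ∀ a : ℝ, 0 < a → ∀ b c : ℝ, {t | t ∈ Set.Icc b c ∧ a ≤ ξ t}.Finite) :
    Monotone (stairs ξ) ∧
    ∀ t : ℝ, 0 ≤ t →
      stairs ξ t = sSup {y : ℝ | ∃ (k : ℕ) (ts : Fin k → ℝ),
        StrictMono ts ∧ (∀ i, ts i ∈ Set.Icc (0 : ℝ) t) ∧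
        (∀ (i : Fin k) (h : (i : ℕ) + 1 < k), 1 ≤ ts ⟨(i : ℕ) + 1, h⟩ - ts i) ∧
        y = ∑ i, ξ (ts i)} := by
  have key : ∀ t, IsLUB (chainSet ξ t) (stairs ξ t) := fun t =>
    stairsAux_isLUB ξ hξ0 hξneg hξfin _ t (Nat.le_ceil t)
  refine ⟨fun a b hab => (key a).mono (key b) (chainSet_mono ξ hab), fun t _ => ?_⟩
  exact ((key t).csSup_eq ⟨0, chainSet_zero ξ t⟩).symm

end
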